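/- Let G be a countably infinite group and μ a probability measure on G with μ(e_G) > 0 such that the kernel P_μ(x,y) = μ(x⁻¹·y) is irreducible. Let (P_j)_{j∈[n]} be transition kernels on G, each equal either to P_μ or to a deterministic kernel P^{(g)} for some g ∈ G, and for 0 ≤ k ≤ ℓ ≤ n let P_{k,ℓ} = P_{k+1}P_{k+2}⋯P_ℓ (with P_{k,k} the identity). Then for any 0 ≤ k ≤ ℓ ≤ n, any x ∈ G and any ε ∈ (0,1): Σ_{y∈G} P_{k,ℓ}(x,y)² ≤ ε, provided the number of indices j ∈ {k+1,…,ℓ} with P_j = P_μ is at least ∫_4^{4/ε} du/(u·ψ(u)). -/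

import Mathlib

open MeasureTheory ProbabilityTheory Filter
open scoped ENNReal NNReal

namespace EvolvingSets

variable {G : Type*} [Group G] [DecidableEq G] [MeasurableSpace G]

/-- The Markov kernel `P_μ(x, y) = μ(x⁻¹ y)` of the `μ`-random walk on `G`. -/
noncomputable def muKer (μ : Measure G) : G → G → ℝ≥0∞ := fun x y => μ {x⁻¹ * y}

/-- The deterministic kernel `P^{(g)}(x, y) = 𝟙{y = x g}`. -/
noncomputable def detKer (g : G) : G → G → ℝ≥0∞ := fun x y => if y = x * g then 1 else 0

/-- Composition of kernels: `(K₁ K₂)(x, z) = Σ_y K₁(x, y) K₂(y, z)`. -/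
noncomputable def comp (K₁ K₂ : G → G → ℝ≥0∞) : G → G → ℝ≥0∞ :=
  fun x z => ∑' y, K₁ x y * K₂ y z

/-- `prodKer Ks k m = P_{k, k+m} = P_{k+1} P_{k+2} ⋯ P_{k+m}` (with `P_{k,k}` the
identity kernel). -/
noncomputable def prodKer (Ks : ℕ → G → G → ℝ≥0∞) (k : ℕ) : ℕ → G → G → ℝ≥0∞
  | 0 => fun x y => if x = y then 1 else 0
  | m + 1 => comp (prodKer Ks k m) (Ks (k + m + 1))

/-- `P_μ` is irreducible: every element of `G` can be reached from the identity by steps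
in the support of `μ`. -/
def IrreducibleKernel (μ : Measure G) : Prop :=
  ∀ x : G, ∃ l : List G, (∀ s ∈ l, 0 < μ {s}) ∧ l.prod = x

/-- The evolving set quantity
`ψ(W) = 1 - E √(|W_μ|/|W|)`, where `W_μ = {y : Σ_{x ∈ W} P_μ(x, y) ≥ Ũ}` and `Ũ` is
uniform on `(0,1)`. -/
noncomputable def psiSet (μ : Measure G) (W : Finset G) : ℝ :=
  1 - ∫ t in (0:ℝ)..1,
        Real.sqrt
          ((({y : G | ENNReal.ofReal t ≤ ∑ x ∈ W, μ {x⁻¹ * y}}.ncard : ℝ)) / W.card)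

/-- The profile `ψ(r) = inf {ψ(W) : W ≠ ∅, |W| ≤ r}`. -/
noncomputable def psiProfile (μ : Measure G) (r : ℝ) : ℝ :=
  sInf (psiSet μ '' {W : Finset G | W.Nonempty ∧ (W.card : ℝ) ≤ r})

end EvolvingSets

open EvolvingSets

/-!
The set `W_t` of the evolving set process started from `{x}` satisfies
`P(y ∈ W_t) = P_{k,t}(x, y)`, and `|W_t|` is a martingale. Since `|W ∩ A| ≤ √|W| √|A|`, squaring
this identity and summing over `y` bounds the `ℓ²`-norm by `m²`, where `m = E √|W_t|`. Sets with
more than `4 / m²` points carry at most half of the root moment `m`, because `E |W_t| = 1`; so a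
step of kernel `P_μ` multiplies `m` by at most `1 - ψ(4 / m²) / 2`, which raises the potential
`∫_4^{4 / m²} du / (u ψ(u))` by at least `1`. A step of any other bistochastic kernel never raises
`m`, by Jensen.
-/

namespace EvolvingSets

lemma sqrt_sub_one_sq {a : ℝ} (ha : 0 ≤ a) : (√a - 1) ^ 2 = a - 2 * √a + 1 := by
  rw [sub_sq, Real.sq_sqrt ha]
  ring

lemma setOf_lt_and_le_add_one_of_pos {p : ℕ → Prop} {k n : ℕ} (hkn : k ≤ n) (hp : p (n + 1)) :
    {j | k < j ∧ j ≤ n + 1 ∧ p j} = insert (n + 1) {j | k < j ∧ j ≤ n ∧ p j} := by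
  ext j
  simp only [Set.mem_ofPred_eq, Set.mem_insert_iff]
  grind

lemma setOf_lt_and_le_add_one_of_neg {p : ℕ → Prop} {k n : ℕ} (hp : ¬p (n + 1)) :
    {j | k < j ∧ j ≤ n + 1 ∧ p j} = {j | k < j ∧ j ≤ n ∧ p j} := by
  ext j
  simp only [Set.mem_ofPred_eq]
  grind

section ProfileIntegral

variable {ψ : ℝ → ℝ} {a b c : ℝ}

lemma intervalIntegrable_one_div_mul (ha : 0 < a) (hpos : ∀ u, a ≤ u → 0 < ψ u)
    (hanti : AntitoneOn ψ (Set.Ici a)) (hab : a ≤ b) (hbc : b ≤ c) :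
    IntervalIntegrable (fun u => 1 / (u * ψ u)) volume b c := by
  have le_of_mem {u : ℝ} (hu : u ∈ Set.uIcc b c) : a ≤ u :=
    hab.trans (Set.uIcc_of_le hbc ▸ hu).1
  have inv_ψ : IntervalIntegrable (fun u => (ψ u)⁻¹) volume b c :=
    MonotoneOn.intervalIntegrable fun u hu v hv huv =>
      inv_anti₀ (hpos v (le_of_mem hv)) (hanti (le_of_mem hu) (le_of_mem hv) huv)
  have inv_cont : ContinuousOn (fun u : ℝ => u⁻¹) (Set.uIcc b c) :=
    continuousOn_inv₀.mono fun u hu => (ha.trans_le (le_of_mem hu)).ne'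
  simpa only [one_div, mul_inv] using inv_ψ.continuousOn_mul inv_cont

lemma strictMonoOn_integral_one_div_mul (ha : 0 < a) (hpos : ∀ u, a ≤ u → 0 < ψ u)
    (hanti : AntitoneOn ψ (Set.Ici a)) :
    StrictMonoOn (fun b => ∫ u in a..b, 1 / (u * ψ u)) (Set.Ici a) := by
  intro b hb c _ hbc
  have integrable_bc := intervalIntegrable_one_div_mul ha hpos hanti hb hbc.le
  have integral_pos : 0 < ∫ u in b..c, 1 / (u * ψ u) :=
    intervalIntegral.intervalIntegral_pos_of_pos_on integrable_bc (fun u hu => by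
      have hau : a ≤ u := (Set.mem_Ici.1 hb).trans hu.1.le
      exact one_div_pos.2 (mul_pos (ha.trans_le hau) (hpos u hau))) hbc
  beta_reduce
  rw [← intervalIntegral.integral_add_adjacent_intervals
    (intervalIntegrable_one_div_mul ha hpos hanti le_rfl hb) integrable_bc]
  exact lt_add_of_pos_right _ integral_pos

/-- On `[b, b exp(ψ b)]` the integrand is at least `1 / (u ψ b)`, whose integral is exactly `1`. -/
lemma one_le_integral_one_div_mul (ha : 0 < a) (hpos : ∀ u, a ≤ u → 0 < ψ u)
    (hanti : AntitoneOn ψ (Set.Ici a)) (hab : a ≤ b) :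
    1 ≤ ∫ u in b..b * Real.exp (ψ b), 1 / (u * ψ u) := by
  have b_pos : 0 < b := ha.trans_le hab
  have hle : b ≤ b * Real.exp (ψ b) :=
    le_mul_of_one_le_right b_pos.le (Real.one_le_exp (hpos b hab).le)
  have inv_cont : ContinuousOn (fun u : ℝ => u⁻¹) (Set.uIcc b (b * Real.exp (ψ b))) :=
    continuousOn_inv₀.mono fun u hu => (b_pos.trans_le (Set.uIcc_of_le hle ▸ hu).1).ne'
  calc (1 : ℝ)
      = ∫ u in b..b * Real.exp (ψ b), u⁻¹ * (ψ b)⁻¹ := by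
        rw [intervalIntegral.integral_mul_const, integral_inv_of_pos b_pos (by positivity),
          mul_div_cancel_left₀ _ b_pos.ne', Real.log_exp, mul_inv_cancel₀ (hpos b hab).ne']
    _ ≤ ∫ u in b..b * Real.exp (ψ b), 1 / (u * ψ u) := by
        refine intervalIntegral.integral_mono_on hle (inv_cont.intervalIntegrable.mul_const _)
          (intervalIntegrable_one_div_mul ha hpos hanti hab hle) fun u hu => ?_
        have hau : a ≤ u := hab.trans hu.1
        rw [one_div, mul_inv]
        exact mul_le_mul_of_nonneg_left (inv_anti₀ (hpos u hau) (hanti hab hau hu.1))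
          (inv_nonneg.2 (ha.trans_le hau).le)

lemma integral_one_div_mul_add_one_le (ha : 0 < a) (hpos : ∀ u, a ≤ u → 0 < ψ u)
    (hanti : AntitoneOn ψ (Set.Ici a)) (hab : a ≤ b) (hbc : b * Real.exp (ψ b) ≤ c) :
    (∫ u in a..b, 1 / (u * ψ u)) + 1 ≤ ∫ u in a..c, 1 / (u * ψ u) := by
  have hle : b ≤ b * Real.exp (ψ b) :=
    le_mul_of_one_le_right (ha.trans_le hab).le (Real.one_le_exp (hpos b hab).le)
  calc (∫ u in a..b, 1 / (u * ψ u)) + 1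
      ≤ (∫ u in a..b, 1 / (u * ψ u)) + ∫ u in b..b * Real.exp (ψ b), 1 / (u * ψ u) := by
        gcongr
        exact one_le_integral_one_div_mul ha hpos hanti hab
    _ = ∫ u in a..b * Real.exp (ψ b), 1 / (u * ψ u) :=
        intervalIntegral.integral_add_adjacent_intervals
          (intervalIntegrable_one_div_mul ha hpos hanti le_rfl hab)
          (intervalIntegrable_one_div_mul ha hpos hanti hab hle)
    _ ≤ ∫ u in a..c, 1 / (u * ψ u) :=
        (strictMonoOn_integral_one_div_mul ha hpos hanti).monotoneOn (hab.trans hle)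
          ((hab.trans hle).trans hbc) hbc

end ProfileIntegral

/-! ### Laws of random finite sets -/

section SetLaws

variable {α : Type*}

/-- The discrete σ-algebra, so that laws of random finite sets are measures on `Finset α`. -/
local instance : MeasurableSpace (Finset α) := ⊤

/-- `E |W|` for a random finite set `W` with law `ν`. -/
noncomputable def meanCard (ν : Measure (Finset α)) : ℝ≥0∞ := ∫⁻ W, (W.card : ℝ≥0∞) ∂ν

/-- `E √|W|` for a random finite set `W` with law `ν`. -/
noncomputable def rootMoment (ν : Measure (Finset α)) : ℝ := ∫ W, √(W.card : ℝ) ∂ν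

variable {ν : Measure (Finset α)}

lemma meanCard_eq_tsum [Countable α] (ν : Measure (Finset α)) :
    meanCard ν = ∑' y, ν {W | y ∈ W} := by
  classical
  have card_eq (W : Finset α) :
      (W.card : ℝ≥0∞) = ∑' y, {A : Finset α | y ∈ A}.indicator 1 W := by
    simp [Set.indicator_apply, tsum_eq_sum (s := W) fun _ hy => if_neg hy]
  simp only [meanCard, card_eq]
  rw [lintegral_tsum fun y => Measurable.of_discrete.aemeasurable]
  simp only [lintegral_indicator_one (MeasurableSet.of_discrete)]

lemma integral_card_eq_toReal_meanCard (ν : Measure (Finset α)) :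
    ∫ W, (W.card : ℝ) ∂ν = (meanCard ν).toReal := by
  simpa [meanCard] using integral_toReal (μ := ν) (f := fun W => (W.card : ℝ≥0∞))
    Measurable.of_discrete.aemeasurable (ae_of_all _ fun W => ENNReal.natCast_lt_top _)

lemma integrable_card (hν : meanCard ν ≠ ∞) : Integrable (fun W => (W.card : ℝ)) ν := by
  simpa using integrable_toReal_of_lintegral_ne_top (μ := ν) (f := fun W => (W.card : ℝ≥0∞))
    Measurable.of_discrete.aemeasurable hν

lemma sqrt_card_le_card (W : Finset α) : √(W.card : ℝ) ≤ W.card :=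
  Real.sqrt_le_iff.2 ⟨Nat.cast_nonneg _, by exact_mod_cast Nat.le_self_pow two_ne_zero _⟩

lemma integrable_sqrt_card (hν : meanCard ν ≠ ∞) : Integrable (fun W => √(W.card : ℝ)) ν :=
  (integrable_card hν).mono' Measurable.of_discrete.aestronglyMeasurable <|
    ae_of_all _ fun W => by
      simpa only [Real.norm_of_nonneg (Real.sqrt_nonneg _)] using sqrt_card_le_card W

lemma rootMoment_nonneg (ν : Measure (Finset α)) : 0 ≤ rootMoment ν :=
  integral_nonneg fun _ => Real.sqrt_nonneg _

lemma rootMoment_le_toReal_meanCard (hν : meanCard ν ≠ ∞) :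
    rootMoment ν ≤ (meanCard ν).toReal := by
  rw [← integral_card_eq_toReal_meanCard]
  exact integral_mono (integrable_sqrt_card hν) (integrable_card hν) sqrt_card_le_card

lemma rootMoment_pos (hν₀ : meanCard ν ≠ 0) (hν : meanCard ν ≠ ∞) : 0 < rootMoment ν := by
  refine (rootMoment_nonneg ν).lt_of_ne' fun h₀ => hν₀ ?_
  have sqrt_card_ae_zero := (integral_eq_zero_iff_of_nonneg
    (fun W : Finset α => Real.sqrt_nonneg _) (integrable_sqrt_card hν)).1 h₀
  rw [meanCard, lintegral_eq_zero_iff Measurable.of_discrete]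
  filter_upwards [sqrt_card_ae_zero] with W hW
  simpa using hW

lemma rootMoment_pos_of_meanCard_eq_one (hν : meanCard ν = 1) : 0 < rootMoment ν :=
  rootMoment_pos (by simp [hν]) (by simp [hν])

lemma ofReal_rootMoment (hν : meanCard ν ≠ ∞) :
    ENNReal.ofReal (rootMoment ν) = ∫⁻ W, ENNReal.ofReal √(W.card : ℝ) ∂ν :=
  ofReal_integral_eq_lintegral_ofReal (integrable_sqrt_card hν)
    (ae_of_all _ fun _ => Real.sqrt_nonneg _)

lemma card_inter_le_sqrt_mul_sqrt [DecidableEq α] (W A : Finset α) :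
    ((W ∩ A).card : ℝ) ≤ √(W.card : ℝ) * √(A.card : ℝ) := by
  rw [← Real.sqrt_mul (Nat.cast_nonneg _)]
  refine Real.le_sqrt_of_sq_le ?_
  rw [sq]
  gcongr
  · exact Finset.inter_subset_left
  · exact Finset.inter_subset_right

lemma tsum_measure_mem_sq [Countable α] [DecidableEq α] (ν : Measure (Finset α)) :
    ∑' y, ν {W | y ∈ W} ^ 2 = ∫⁻ W, ∫⁻ A, ((W ∩ A).card : ℝ≥0∞) ∂ν ∂ν := by
  have inner (W : Finset α) : ∫⁻ A, ((W ∩ A).card : ℝ≥0∞) ∂ν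
      = ∑' y, {A : Finset α | y ∈ A}.indicator 1 W * ν {A | y ∈ A} := by
    have h := meanCard_eq_tsum (ν.map (W ∩ ·))
    rw [meanCard, lintegral_map .of_discrete .of_discrete] at h
    rw [h]
    refine tsum_congr fun y => ?_
    rw [Measure.map_apply .of_discrete .of_discrete]
    by_cases hy : y ∈ W <;> simp [hy]
  simp only [inner]
  rw [lintegral_tsum fun y => Measurable.of_discrete.aemeasurable]
  refine tsum_congr fun y => ?_
  rw [lintegral_mul_const _ .of_discrete, lintegral_indicator_one .of_discrete, sq]

lemma tsum_measure_mem_sq_le [Countable α] (hν : meanCard ν ≠ ∞) :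
    ∑' y, ν {W | y ∈ W} ^ 2 ≤ ENNReal.ofReal (rootMoment ν ^ 2) := by
  classical
  calc ∑' y, ν {W | y ∈ W} ^ 2
      = ∫⁻ W, ∫⁻ A, ((W ∩ A).card : ℝ≥0∞) ∂ν ∂ν := tsum_measure_mem_sq ν
    _ ≤ ∫⁻ W, ∫⁻ A, ENNReal.ofReal √(W.card : ℝ) * ENNReal.ofReal √(A.card : ℝ) ∂ν ∂ν := by
        gcongr with W A
        rw [← ENNReal.ofReal_mul (Real.sqrt_nonneg _), ← ENNReal.ofReal_natCast]
        exact ENNReal.ofReal_le_ofReal (card_inter_le_sqrt_mul_sqrt W A)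
    _ = ENNReal.ofReal (rootMoment ν ^ 2) := by
        simp only [lintegral_const_mul _ Measurable.of_discrete]
        rw [lintegral_mul_const _ .of_discrete, ← ofReal_rootMoment hν,
          ← ENNReal.ofReal_mul (rootMoment_nonneg ν), sq]

/-! ### The evolving set step -/

variable {P : α → α → ℝ≥0∞}

/-- Kernels with unit row and column sums. Both `P_μ` and the deterministic kernels `P^{(g)}` are
of this kind, and evolving sets treat them alike. -/
structure IsBistochastic (P : α → α → ℝ≥0∞) : Prop where
  tsum_row : ∀ x, ∑' y, P x y = 1
  tsum_col : ∀ y, ∑' x, P x y = 1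

/-- The mass `∑_{x ∈ W} P(x, y)` that `P` sends from `W` to `y`. -/
noncomputable def inflow (P : α → α → ℝ≥0∞) (W : Finset α) (y : α) : ℝ≥0∞ := ∑ x ∈ W, P x y

open Classical in
/-- The evolving set step `{y | inflow P W y ≥ t}` as a `Finset`. Only `t ∈ (0, 1]` matters; the
step is empty for `t ≤ 0`, where the set may be infinite. -/
noncomputable def evolve (P : α → α → ℝ≥0∞) (W : Finset α) (t : ℝ) : Finset α :=
  if h : 0 < t ∧ {y | ENNReal.ofReal t ≤ inflow P W y}.Finite then h.2.toFinset else ∅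

/-- The law of the evolving set step from `W` for a uniform threshold in `(0, 1]`. -/
noncomputable def evolveLaw (P : α → α → ℝ≥0∞) (W : Finset α) : Measure (Finset α) :=
  (volume.restrict (Set.Ioc 0 1)).map (evolve P W)

lemma inflow_eq_tsum (P : α → α → ℝ≥0∞) (W : Finset α) (y : α) :
    inflow P W y = ∑' x, {A : Finset α | x ∈ A}.indicator 1 W * P x y := by
  rw [inflow, tsum_eq_sum (s := W) fun x hx => by simp [hx]]
  exact Finset.sum_congr rfl fun x hx => by simp [hx]

lemma le_inflow {W : Finset α} {x : α} (hx : x ∈ W) (y : α) : P x y ≤ inflow P W y :=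
  Finset.single_le_sum (f := fun x => P x y) (fun _ _ => zero_le) hx

namespace IsBistochastic

lemma tsum_inflow (hP : IsBistochastic P) (W : Finset α) : ∑' y, inflow P W y = W.card := by
  simp only [inflow, Summable.tsum_finsetSum fun _ _ => ENNReal.summable, hP.tsum_row,
    Finset.sum_const, nsmul_one]

lemma inflow_le_one (hP : IsBistochastic P) (W : Finset α) (y : α) : inflow P W y ≤ 1 :=
  (ENNReal.sum_le_tsum W).trans_eq (hP.tsum_col y)

lemma mem_evolve (hP : IsBistochastic P) {W : Finset α} {t : ℝ} {y : α} :
    y ∈ evolve P W t ↔ 0 < t ∧ ENNReal.ofReal t ≤ inflow P W y := by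
  have finite_of_pos (ht : 0 < t) : {y | ENNReal.ofReal t ≤ inflow P W y}.Finite :=
    ENNReal.finite_const_le_of_tsum_ne_top (by simp [hP.tsum_inflow W]) (by simpa using ht)
  unfold evolve
  split_ifs with h
  · simp [h.1]
  · simpa using fun ht => (h ⟨ht, finite_of_pos ht⟩).elim

lemma card_evolve (hP : IsBistochastic P) (W : Finset α) {t : ℝ} (ht : 0 < t) :
    (evolve P W t).card = {y | ENNReal.ofReal t ≤ inflow P W y}.ncard := by
  rw [← Set.ncard_coe_finset]
  congr 1
  ext y
  simp [hP.mem_evolve, ht]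

lemma measurable_evolve [Countable α] (hP : IsBistochastic P) (W : Finset α) :
    Measurable (evolve P W) := by
  have measurableSet_mem (y : α) : MeasurableSet {t | y ∈ evolve P W t} := by
    simp only [hP.mem_evolve]
    exact measurableSet_Ioi.inter (measurableSet_le ENNReal.measurable_ofReal measurable_const)
  refine measurable_to_countable' fun A => ?_
  have preimage_eq : evolve P W ⁻¹' {A} = ⋂ y, {t | y ∈ evolve P W t ↔ y ∈ A} := by
    ext t
    simp [Finset.ext_iff]
  rw [preimage_eq]
  exact .iInter fun y => (measurableSet_mem y).iff (.const _)

variable [Countable α]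

lemma evolveLaw_setOf_subset (hP : IsBistochastic P) (W B : Finset α) :
    evolveLaw P W {A | B ⊆ A} = min 1 (B.inf (inflow P W)) := by
  set c := min 1 (B.inf (inflow P W)) with hc
  have c_ne_top : c ≠ ∞ := ne_top_of_le_ne_top ENNReal.one_ne_top (min_le_left _ _)
  have le_c_iff (t : ℝ) :
      t ≤ c.toReal ↔ t ≤ 1 ∧ ∀ y ∈ B, ENNReal.ofReal t ≤ inflow P W y := by
    rw [← ENNReal.ofReal_le_iff_le_toReal c_ne_top, hc, le_min_iff, Finset.le_inf_iff,
      ENNReal.ofReal_le_one]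
  have thresholds : evolve P W ⁻¹' {A | B ⊆ A} ∩ Set.Ioc 0 1 = Set.Ioc 0 c.toReal := by
    ext t
    simp only [Set.mem_inter_iff, Set.mem_preimage, Set.mem_ofPred_eq, Set.mem_Ioc,
      Finset.subset_iff, hP.mem_evolve, le_c_iff]
    grind
  rw [evolveLaw, Measure.map_apply (hP.measurable_evolve W) .of_discrete,
    Measure.restrict_apply (hP.measurable_evolve W .of_discrete), thresholds, Real.volume_Ioc,
    sub_zero, ENNReal.ofReal_toReal c_ne_top]

lemma isProbabilityMeasure_evolveLaw (hP : IsBistochastic P) (W : Finset α) :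
    IsProbabilityMeasure (evolveLaw P W) :=
  ⟨by simpa using hP.evolveLaw_setOf_subset W ∅⟩

lemma evolveLaw_setOf_mem (hP : IsBistochastic P) (W : Finset α) (y : α) :
    evolveLaw P W {A | y ∈ A} = inflow P W y := by
  simpa [hP.inflow_le_one W y] using hP.evolveLaw_setOf_subset W {y}

lemma meanCard_evolveLaw (hP : IsBistochastic P) (W : Finset α) :
    meanCard (evolveLaw P W) = W.card := by
  simp only [meanCard_eq_tsum, hP.evolveLaw_setOf_mem, hP.tsum_inflow]

lemma bind_evolveLaw_setOf_mem (hP : IsBistochastic P) (ν : Measure (Finset α)) (z : α) :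
    ν.bind (evolveLaw P) {A | z ∈ A} = ∑' y, ν {W | y ∈ W} * P y z := by
  rw [Measure.bind_apply .of_discrete Measurable.of_discrete.aemeasurable]
  simp only [hP.evolveLaw_setOf_mem, inflow_eq_tsum P]
  rw [lintegral_tsum fun y => Measurable.of_discrete.aemeasurable]
  simp only [lintegral_mul_const _ Measurable.of_discrete,
    lintegral_indicator_one MeasurableSet.of_discrete]

lemma meanCard_bind_evolveLaw (hP : IsBistochastic P) (ν : Measure (Finset α)) :
    meanCard (ν.bind (evolveLaw P)) = meanCard ν := by
  rw [meanCard, Measure.lintegral_bind Measurable.of_discrete.aemeasurable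
    Measurable.of_discrete.aemeasurable]
  exact lintegral_congr fun W => hP.meanCard_evolveLaw W

lemma rootMoment_bind_evolveLaw (hP : IsBistochastic P) (ν : Measure (Finset α)) :
    rootMoment (ν.bind (evolveLaw P)) = ∫ W, rootMoment (evolveLaw P W) ∂ν := by
  have meanCard_ne_top (W : Finset α) : meanCard (evolveLaw P W) ≠ ∞ := by
    simp [hP.meanCard_evolveLaw W]
  rw [rootMoment, integral_eq_lintegral_of_nonneg_ae (ae_of_all _ fun _ => Real.sqrt_nonneg _)
      Measurable.of_discrete.aestronglyMeasurable,
    Measure.lintegral_bind Measurable.of_discrete.aemeasurable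
      Measurable.of_discrete.aemeasurable,
    integral_eq_lintegral_of_nonneg_ae (ae_of_all _ fun _ => rootMoment_nonneg _)
      Measurable.of_discrete.aestronglyMeasurable]
  simp only [ofReal_rootMoment (meanCard_ne_top _)]

end IsBistochastic

/-! ### Growth gauge and root profile -/

/-- The growth gauge `ψ(W)` of Morris and Peres for a general kernel; `psiSet μ` is the case
`P = muKer μ`. -/
noncomputable def growthGauge (P : α → α → ℝ≥0∞) (W : Finset α) : ℝ :=
  1 - ∫ t in (0 : ℝ)..1, √({y | ENNReal.ofReal t ≤ inflow P W y}.ncard / W.card : ℝ)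

/-- The root profile `ψ(r)` of Morris and Peres for a general kernel; `psiProfile μ` is the case
`P = muKer μ`. -/
noncomputable def rootProfile (P : α → α → ℝ≥0∞) (r : ℝ) : ℝ :=
  sInf (growthGauge P '' {W | W.Nonempty ∧ (W.card : ℝ) ≤ r})

lemma image_growthGauge_nonempty [Nonempty α] (P : α → α → ℝ≥0∞) {r : ℝ} (hr : 1 ≤ r) :
    (growthGauge P '' {W | W.Nonempty ∧ (W.card : ℝ) ≤ r}).Nonempty :=
  let ⟨x⟩ := ‹Nonempty α›
  ⟨_, {x}, ⟨Finset.singleton_nonempty x, by simpa using hr⟩, rfl⟩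

namespace IsBistochastic

variable [Countable α]

lemma growthGauge_eq_one_sub_integral (hP : IsBistochastic P) (W : Finset α) :
    growthGauge P W = 1 - ∫ A, √(A.card / W.card : ℝ) ∂evolveLaw P W := by
  rw [growthGauge, evolveLaw, integral_map (hP.measurable_evolve W).aemeasurable
    Measurable.of_discrete.aestronglyMeasurable, intervalIntegral.integral_of_le zero_le_one]
  congr 1
  refine setIntegral_congr_fun measurableSet_Ioc fun t ht => ?_
  simp only [hP.card_evolve W ht.1]

lemma rootMoment_evolveLaw (hP : IsBistochastic P) (W : Finset α) :
    rootMoment (evolveLaw P W) = √(W.card : ℝ) * (1 - growthGauge P W) := by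
  rcases W.eq_empty_or_nonempty with rfl | hW
  · have rootMoment_le :=
      rootMoment_le_toReal_meanCard (ν := evolveLaw P ∅) (by simp [hP.meanCard_evolveLaw])
    rw [hP.meanCard_evolveLaw] at rootMoment_le
    simpa using le_antisymm (by simpa using rootMoment_le) (rootMoment_nonneg _)
  · have hW' : √(W.card : ℝ) ≠ 0 := by simpa using hW.ne_empty
    rw [hP.growthGauge_eq_one_sub_integral, sub_sub_cancel, ← integral_const_mul, rootMoment]
    simp only [Real.sqrt_div (Nat.cast_nonneg _), mul_div_cancel₀ _ hW']

lemma integrable_card_div (hP : IsBistochastic P) (W : Finset α) (c : ℝ) :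
    Integrable (fun A => (A.card / c : ℝ)) (evolveLaw P W) :=
  (integrable_card (by simp [hP.meanCard_evolveLaw W])).div_const c

lemma integrable_sqrt_card_div (hP : IsBistochastic P) (W : Finset α) (c : ℝ) :
    Integrable (fun A => √(A.card / c : ℝ)) (evolveLaw P W) := by
  simpa only [Real.sqrt_div (Nat.cast_nonneg _)] using
    (integrable_sqrt_card (by simp [hP.meanCard_evolveLaw W])).div_const √c

lemma integral_card_div_card (hP : IsBistochastic P) {W : Finset α} (hW : W.Nonempty) :
    ∫ A, (A.card / W.card : ℝ) ∂evolveLaw P W = 1 := by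
  rw [integral_div, integral_card_eq_toReal_meanCard, hP.meanCard_evolveLaw, ENNReal.toReal_natCast]
  exact div_self (Nat.cast_ne_zero.2 hW.card_pos.ne')

lemma integrable_sqrt_card_div_sub_one_sq (hP : IsBistochastic P) (W : Finset α) :
    Integrable (fun A => (√(A.card / W.card : ℝ) - 1) ^ 2) (evolveLaw P W) := by
  have := hP.isProbabilityMeasure_evolveLaw W
  refine (((hP.integrable_card_div W W.card).sub
    ((hP.integrable_sqrt_card_div W W.card).const_mul 2)).add (integrable_const 1)).congr ?_
  exact ae_of_all _ fun A => (sqrt_sub_one_sq (by positivity)).symm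

lemma growthGauge_eq_half_integral_sq (hP : IsBistochastic P) {W : Finset α} (hW : W.Nonempty) :
    growthGauge P W = (∫ A, (√(A.card / W.card : ℝ) - 1) ^ 2 ∂evolveLaw P W) / 2 := by
  have := hP.isProbabilityMeasure_evolveLaw W
  have integrable_ratio := hP.integrable_card_div W W.card
  have integrable_two_sqrt := (hP.integrable_sqrt_card_div W W.card).const_mul 2
  calc growthGauge P W
      = (1 - 2 * ∫ A, √(A.card / W.card : ℝ) ∂evolveLaw P W + 1) / 2 := by
        rw [hP.growthGauge_eq_one_sub_integral]
        ring
    _ = (∫ A, ((A.card / W.card : ℝ) - 2 * √(A.card / W.card : ℝ) + 1) ∂evolveLaw P W) / 2 := by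
        rw [integral_add (integrable_ratio.sub' integrable_two_sqrt) (integrable_const 1),
          integral_sub integrable_ratio integrable_two_sqrt, hP.integral_card_div_card hW,
          integral_const_mul, integral_const, probReal_univ, one_smul]
    _ = (∫ A, (√(A.card / W.card : ℝ) - 1) ^ 2 ∂evolveLaw P W) / 2 := by
        congr! 3 with A
        exact (sqrt_sub_one_sq (by positivity)).symm

lemma growthGauge_nonneg (hP : IsBistochastic P) (W : Finset α) : 0 ≤ growthGauge P W := by
  rcases W.eq_empty_or_nonempty with rfl | hW
  · simp [growthGauge]
  · rw [hP.growthGauge_eq_half_integral_sq hW]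
    exact div_nonneg (integral_nonneg fun _ => sq_nonneg _) zero_le_two

lemma le_evolveLaw_card_lt (hP : IsBistochastic P) {W : Finset α} {c : ℝ≥0∞}
    (hstay : ∀ x ∈ W, c ≤ P x x) {y : α} (hyW : y ∉ W) (hy : c ≤ inflow P W y) :
    c ≤ evolveLaw P W {A | W.card < A.card} := by
  classical
  calc c ≤ evolveLaw P W {A | insert y W ⊆ A} := by
        rw [hP.evolveLaw_setOf_subset, le_min_iff, Finset.le_inf_iff]
        refine ⟨hy.trans (hP.inflow_le_one W y), fun z hz => ?_⟩
        rcases Finset.mem_insert.1 hz with rfl | hzW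
        · exact hy
        · exact (hstay z hzW).trans (le_inflow hzW z)
    _ ≤ evolveLaw P W {A | W.card < A.card} := measure_mono fun A hA =>
        Finset.card_lt_card ((Finset.ssubset_insert hyW).trans_subset hA)

lemma le_growthGauge (hP : IsBistochastic P) {W : Finset α} (hW : W.Nonempty) {r η : ℝ}
    (hr : W.card ≤ r) (hη : ENNReal.ofReal η ≤ evolveLaw P W {A | W.card < A.card}) :
    (√(1 + 1 / r) - 1) ^ 2 * η / 2 ≤ growthGauge P W := by
  have := hP.isProbabilityMeasure_evolveLaw W
  have card_pos : (0 : ℝ) < W.card := by exact_mod_cast hW.card_pos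
  have r_pos : 0 < r := card_pos.trans_le hr
  have sqrt_sub_one_nonneg : 0 ≤ √(1 + 1 / r) - 1 :=
    sub_nonneg.2 (Real.one_le_sqrt.2 (by simpa using r_pos.le))
  have gain_le {A : Finset α} (hA : W.card < A.card) :
      (√(1 + 1 / r) - 1) ^ 2 ≤ (√(A.card / W.card : ℝ) - 1) ^ 2 := by
    have : 1 + 1 / r ≤ (A.card / W.card : ℝ) := calc
      1 + 1 / r ≤ 1 + 1 / (W.card : ℝ) := by gcongr
      _ = (W.card + 1 : ℝ) / W.card := by field_simp
      _ ≤ (A.card / W.card : ℝ) := by gcongr; exact_mod_cast hA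
    gcongr
  have η_le : η ≤ (evolveLaw P W).real
      {A | (√(1 + 1 / r) - 1) ^ 2 ≤ (√(A.card / W.card : ℝ) - 1) ^ 2} :=
    (ENNReal.ofReal_le_iff_le_toReal (measure_ne_top _ _)).1
      (hη.trans (measure_mono fun _ hA => gain_le hA))
  rw [hP.growthGauge_eq_half_integral_sq hW]
  gcongr
  calc (√(1 + 1 / r) - 1) ^ 2 * η
      ≤ (√(1 + 1 / r) - 1) ^ 2 * (evolveLaw P W).real
          {A | (√(1 + 1 / r) - 1) ^ 2 ≤ (√(A.card / W.card : ℝ) - 1) ^ 2} := by gcongr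
    _ ≤ ∫ A, (√(A.card / W.card : ℝ) - 1) ^ 2 ∂evolveLaw P W :=
        mul_meas_ge_le_integral_of_nonneg (ae_of_all _ fun _ => sq_nonneg _)
          (hP.integrable_sqrt_card_div_sub_one_sq W) _

lemma bddBelow_image_growthGauge (hP : IsBistochastic P) (S : Set (Finset α)) :
    BddBelow (growthGauge P '' S) :=
  ⟨0, by rintro _ ⟨W, -, rfl⟩; exact hP.growthGauge_nonneg W⟩

lemma rootProfile_le_growthGauge (hP : IsBistochastic P) {W : Finset α} (hW : W.Nonempty) {r : ℝ}
    (hr : W.card ≤ r) : rootProfile P r ≤ growthGauge P W :=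
  csInf_le (hP.bddBelow_image_growthGauge _) ⟨W, ⟨hW, hr⟩, rfl⟩

lemma antitoneOn_rootProfile [Nonempty α] (hP : IsBistochastic P) :
    AntitoneOn (rootProfile P) (Set.Ici 1) := fun _ hr _ _ hrs =>
  csInf_le_csInf (hP.bddBelow_image_growthGauge _) (image_growthGauge_nonempty P hr)
    (Set.image_mono fun _ hW => ⟨hW.1, hW.2.trans hrs⟩)

lemma rootMoment_bind_evolveLaw_le_rootMoment (hP : IsBistochastic P) {ν : Measure (Finset α)}
    (hν : meanCard ν ≠ ∞) : rootMoment (ν.bind (evolveLaw P)) ≤ rootMoment ν := by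
  rw [hP.rootMoment_bind_evolveLaw]
  refine integral_mono_of_nonneg (ae_of_all _ fun _ => rootMoment_nonneg _)
    (integrable_sqrt_card hν) (ae_of_all _ fun W => ?_)
  beta_reduce
  rw [hP.rootMoment_evolveLaw]
  exact mul_le_of_le_one_right (Real.sqrt_nonneg _) (sub_le_self _ (hP.growthGauge_nonneg W))

/-- A set with more than `4 / m ^ 2` points satisfies `√|W| ≤ (m / 2) |W|`, so that the loss of
root moment may be charged to `E |W|` there. -/
lemma rootMoment_evolveLaw_le (hP : IsBistochastic P) {m : ℝ} (hm : 0 < m)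
    (hψ : 0 ≤ rootProfile P (4 / m ^ 2)) (W : Finset α) :
    rootMoment (evolveLaw P W) ≤ (1 - rootProfile P (4 / m ^ 2)) * √(W.card : ℝ)
      + rootProfile P (4 / m ^ 2) * (m / 2) * W.card := by
  rw [hP.rootMoment_evolveLaw]
  set ψ := rootProfile P (4 / m ^ 2)
  rcases le_or_gt (W.card : ℝ) (4 / m ^ 2) with small | large
  · have loss : √(W.card : ℝ) * ψ ≤ √(W.card : ℝ) * growthGauge P W := by
      rcases W.eq_empty_or_nonempty with rfl | hW
      · simp
      · gcongr
        exact hP.rootProfile_le_growthGauge hW small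
    have : 0 ≤ ψ * (m / 2) * W.card := by positivity
    linarith
  · have two_div_le_sqrt : 2 / m ≤ √(W.card : ℝ) :=
      Real.le_sqrt_of_sq_le (by rw [div_pow]; linarith)
    have sqrt_le : √(W.card : ℝ) ≤ m / 2 * W.card := calc
      √(W.card : ℝ) = m / 2 * (2 / m * √(W.card : ℝ)) := by field_simp
      _ ≤ m / 2 * (√(W.card : ℝ) * √(W.card : ℝ)) := by gcongr
      _ = m / 2 * W.card := by rw [Real.mul_self_sqrt (Nat.cast_nonneg _)]
    have loss := mul_le_mul_of_nonneg_left sqrt_le hψ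
    have := mul_nonneg (Real.sqrt_nonneg (W.card : ℝ)) (hP.growthGauge_nonneg W)
    linarith

lemma rootMoment_bind_evolveLaw_le (hP : IsBistochastic P) {ν : Measure (Finset α)}
    (hν : meanCard ν = 1) (hψ : 0 ≤ rootProfile P (4 / rootMoment ν ^ 2)) :
    rootMoment (ν.bind (evolveLaw P)) ≤
      rootMoment ν * (1 - rootProfile P (4 / rootMoment ν ^ 2) / 2) := by
  have m_pos := rootMoment_pos_of_meanCard_eq_one hν
  set ψ := rootProfile P (4 / rootMoment ν ^ 2)
  have integrable_root : Integrable (fun W => (1 - ψ) * √(W.card : ℝ)) ν :=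
    (integrable_sqrt_card (by simp [hν])).const_mul _
  have integrable_card : Integrable (fun W => ψ * (rootMoment ν / 2) * (W.card : ℝ)) ν :=
    (integrable_card (by simp [hν])).const_mul _
  calc rootMoment (ν.bind (evolveLaw P))
      = ∫ W, rootMoment (evolveLaw P W) ∂ν := hP.rootMoment_bind_evolveLaw ν
    _ ≤ ∫ W, ((1 - ψ) * √(W.card : ℝ) + ψ * (rootMoment ν / 2) * W.card) ∂ν :=
        integral_mono_of_nonneg (ae_of_all _ fun _ => rootMoment_nonneg _)
          (integrable_root.add integrable_card)
          (ae_of_all _ (hP.rootMoment_evolveLaw_le m_pos hψ))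
    _ = (1 - ψ) * rootMoment ν + ψ * (rootMoment ν / 2) * 1 := by
        rw [integral_add integrable_root integrable_card, integral_const_mul, integral_const_mul,
          integral_card_eq_toReal_meanCard, hν, ENNReal.toReal_one, rootMoment]
    _ = rootMoment ν * (1 - ψ / 2) := by ring

end IsBistochastic

/-! ### The evolving set process -/

section EvolvingLaw

/-- The law of the set `W_m` of the evolving set process started from `{x}` and driven by
`P_{k+1}, …, P_{k+m}`. -/
noncomputable def evolvingLaw (Ks : ℕ → α → α → ℝ≥0∞) (k : ℕ) (x : α) : ℕ → Measure (Finset α)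
  | 0 => Measure.dirac {x}
  | m + 1 => (evolvingLaw Ks k x m).bind (evolveLaw (Ks (k + m + 1)))

lemma four_le_four_div_rootMoment_sq (hν : meanCard ν = 1) :
    4 ≤ 4 / rootMoment ν ^ 2 := by
  have m_pos := rootMoment_pos_of_meanCard_eq_one hν
  have rootMoment_le_one : rootMoment ν ≤ 1 := by
    simpa [hν] using rootMoment_le_toReal_meanCard (ν := ν) (by simp [hν])
  exact le_div_self (by simp) (by positivity) (pow_le_one₀ m_pos.le rootMoment_le_one)

variable [Countable α] {Ks : ℕ → α → α → ℝ≥0∞} {k m : ℕ}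

lemma evolvingLaw_setOf_mem [DecidableEq α]
    (hKs : ∀ j, k < j → j ≤ k + m → IsBistochastic (Ks j)) (x y : α) :
    evolvingLaw Ks k x m {W | y ∈ W} = prodKer Ks k m x y := by
  induction m generalizing y with
  | zero =>
    rw [evolvingLaw, Measure.dirac_apply' _ .of_discrete]
    simp [prodKer, Set.indicator_apply, eq_comm]
  | succ m ih =>
    rw [evolvingLaw, (hKs (k + m + 1) (by lia) (by lia)).bind_evolveLaw_setOf_mem]
    simp only [prodKer, comp, ih fun j hkj hjm => hKs j hkj (by lia)]

lemma meanCard_evolvingLaw (hKs : ∀ j, k < j → j ≤ k + m → IsBistochastic (Ks j)) (x : α) :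
    meanCard (evolvingLaw Ks k x m) = 1 := by
  induction m with
  | zero =>
    rw [evolvingLaw, meanCard, lintegral_dirac' _ .of_discrete, Finset.card_singleton, Nat.cast_one]
  | succ m ih =>
    rw [evolvingLaw, (hKs (k + m + 1) (by lia) (by lia)).meanCard_bind_evolveLaw]
    exact ih fun j hkj hjm => hKs j hkj (by lia)

/-- `∫_4^{4 / m²} du / (u ψ(u))` with `m = E √|W|`, the potential that every step of kernel `P`
raises by at least one. -/
noncomputable def potential (P : α → α → ℝ≥0∞) (ν : Measure (Finset α)) : ℝ :=
  ∫ u in (4 : ℝ)..4 / rootMoment ν ^ 2, 1 / (u * rootProfile P u)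

namespace IsBistochastic

lemma strictMonoOn_integral_rootProfile [Nonempty α] (hP : IsBistochastic P)
    (hψ : ∀ r, 4 ≤ r → 0 < rootProfile P r) :
    StrictMonoOn (fun b => ∫ u in (4 : ℝ)..b, 1 / (u * rootProfile P u)) (Set.Ici 4) :=
  strictMonoOn_integral_one_div_mul zero_lt_four hψ
    (hP.antitoneOn_rootProfile.mono (Set.Ici_subset_Ici.2 (by norm_num)))

lemma potential_le_potential_bind [Nonempty α] (hP : IsBistochastic P)
    (hψ : ∀ r, 4 ≤ r → 0 < rootProfile P r) {K : α → α → ℝ≥0∞} (hK : IsBistochastic K)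
    (hν : meanCard ν = 1) : potential P ν ≤ potential P (ν.bind (evolveLaw K)) := by
  have meanCard_bind := (hK.meanCard_bind_evolveLaw ν).trans hν
  have rootMoment_bind_pos := rootMoment_pos_of_meanCard_eq_one meanCard_bind
  refine (hP.strictMonoOn_integral_rootProfile hψ).monotoneOn
    (four_le_four_div_rootMoment_sq hν) (four_le_four_div_rootMoment_sq meanCard_bind) ?_
  gcongr
  exact hK.rootMoment_bind_evolveLaw_le_rootMoment (by simp [hν])

lemma potential_add_one_le [Nonempty α] (hP : IsBistochastic P)
    (hψ : ∀ r, 4 ≤ r → 0 < rootProfile P r) (hν : meanCard ν = 1) :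
    potential P ν + 1 ≤ potential P (ν.bind (evolveLaw P)) := by
  have meanCard_bind := (hP.meanCard_bind_evolveLaw ν).trans hν
  have rootMoment_bind_pos := rootMoment_pos_of_meanCard_eq_one meanCard_bind
  have m_pos := rootMoment_pos_of_meanCard_eq_one hν
  have four_le := four_le_four_div_rootMoment_sq hν
  set m := rootMoment ν
  set c := rootProfile P (4 / m ^ 2)
  have decay : rootMoment (ν.bind (evolveLaw P)) ≤ m * Real.exp (-(c / 2)) := calc
    rootMoment (ν.bind (evolveLaw P)) ≤ m * (1 - c / 2) :=
      hP.rootMoment_bind_evolveLaw_le hν (hψ _ four_le).le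
    _ ≤ m * Real.exp (-(c / 2)) := by
      gcongr
      exact Real.one_sub_le_exp_neg _
  refine integral_one_div_mul_add_one_le zero_lt_four hψ
    (hP.antitoneOn_rootProfile.mono (Set.Ici_subset_Ici.2 (by norm_num))) four_le ?_
  calc 4 / m ^ 2 * Real.exp c
      = 4 / (m * Real.exp (-(c / 2))) ^ 2 := by
        rw [mul_pow, ← Real.exp_nat_mul, Nat.cast_two, mul_neg, mul_div_cancel₀ _ two_ne_zero,
          Real.exp_neg, ← div_div, div_inv_eq_mul]
    _ ≤ 4 / rootMoment (ν.bind (evolveLaw P)) ^ 2 := by gcongr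

lemma ncard_le_potential_evolvingLaw (hP : IsBistochastic P)
    (hψ : ∀ r, 4 ≤ r → 0 < rootProfile P r)
    (hKs : ∀ j, k < j → j ≤ k + m → IsBistochastic (Ks j)) (x : α) :
    ({j | k < j ∧ j ≤ k + m ∧ Ks j = P}.ncard : ℝ) ≤ potential P (evolvingLaw Ks k x m) := by
  have : Nonempty α := ⟨x⟩
  induction m with
  | zero =>
    have no_steps : {j | k < j ∧ j ≤ k ∧ Ks j = P} = ∅ :=
      Set.eq_empty_of_forall_notMem fun j hj => hj.1.not_ge hj.2.1
    simp [no_steps, potential, rootMoment, evolvingLaw, integral_dirac' _ _ .of_discrete]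
  | succ m ih =>
    have hKs' : ∀ j, k < j → j ≤ k + m → IsBistochastic (Ks j) := fun j hkj hjm =>
      hKs j hkj (by lia)
    have hν := meanCard_evolvingLaw hKs' x
    rw [evolvingLaw, ← add_assoc]
    by_cases hKP : Ks (k + m + 1) = P
    · rw [setOf_lt_and_le_add_one_of_pos (p := fun j => Ks j = P) (k.le_add_right m) hKP, hKP]
      calc ((insert (k + m + 1) {j | k < j ∧ j ≤ k + m ∧ Ks j = P}).ncard : ℝ)
          ≤ {j | k < j ∧ j ≤ k + m ∧ Ks j = P}.ncard + 1 := by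
            exact_mod_cast Set.ncard_insert_le _ _
        _ ≤ potential P (evolvingLaw Ks k x m) + 1 := by
            gcongr
            exact ih hKs'
        _ ≤ potential P ((evolvingLaw Ks k x m).bind (evolveLaw P)) :=
            hP.potential_add_one_le hψ hν
    · rw [setOf_lt_and_le_add_one_of_neg (p := fun j => Ks j = P) hKP]
      exact (ih hKs').trans
        (hP.potential_le_potential_bind hψ (hKs (k + m + 1) (by lia) (by lia)) hν)

end IsBistochastic

end EvolvingLaw

end SetLaws

/-! ### Random walks on groups -/

section RandomWalk

variable {G : Type*} [Group G]

lemma isBistochastic_detKer [DecidableEq G] (g : G) : IsBistochastic (detKer g) := by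
  refine ⟨fun x => by simp [detKer], fun y => ?_⟩
  simp only [detKer, ← mul_inv_eq_iff_eq_mul]
  simp

lemma exists_mul_notMem_of_mul_prod_notMem {W : Finset G} {l : List G} {x : G} (hx : x ∈ W)
    (hl : x * l.prod ∉ W) : ∃ w ∈ W, ∃ s ∈ l, w * s ∉ W := by
  induction l generalizing x with
  | nil => exact absurd hx (by simpa using hl)
  | cons a l ih =>
    by_cases ha : x * a ∈ W
    · obtain ⟨w, hw, s, hs, hws⟩ := ih ha (by simpa [mul_assoc] using hl)
      exact ⟨w, hw, s, List.mem_cons_of_mem a hs, hws⟩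
    · exact ⟨x, hx, a, List.mem_cons_self, ha⟩

variable [MeasurableSpace G] {μ : Measure G}

lemma isBistochastic_muKer [MeasurableSingletonClass G] [Countable G] (μ : Measure G)
    [IsProbabilityMeasure μ] : IsBistochastic (muKer μ) := by
  have tsum_singleton : ∑' g, μ {g} = 1 := by
    simpa using (lintegral_countable' (μ := μ) fun _ => (1 : ℝ≥0∞)).symm
  exact ⟨fun x => ((Equiv.mulLeft x⁻¹).tsum_eq fun g => μ {g}).trans tsum_singleton,
    fun y => (((Equiv.inv G).trans (Equiv.mulRight y)).tsum_eq fun g => μ {g}).trans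
      tsum_singleton⟩

/-- Left multiplication by a point of `W` maps `n + 1` fixed elements to `n + 1` points, one of
which lies outside `W`; the letters of the words spelling these elements form `S`. -/
lemma exists_finset_forall_exists_mul_notMem [Infinite G] (hirr : IrreducibleKernel μ) (n : ℕ) :
    ∃ S : Finset G, (∀ s ∈ S, 0 < μ {s}) ∧
      ∀ W : Finset G, W.Nonempty → W.card ≤ n → ∃ w ∈ W, ∃ s ∈ S, w * s ∉ W := by
  classical
  obtain ⟨T, hT⟩ := Infinite.exists_subset_card_eq G (n + 1)
  choose word pos_of_mem_word prod_word using hirr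
  refine ⟨T.biUnion fun g => (word g).toFinset, fun s hs => ?_, fun W ⟨x, hx⟩ hWn => ?_⟩
  · obtain ⟨g, -, hg⟩ := Finset.mem_biUnion.1 hs
    exact pos_of_mem_word g s (List.mem_toFinset.1 hg)
  · have card_lt : W.card < (T.image (x * ·)).card := by
      rw [Finset.card_image_of_injective _ (mul_right_injective x), hT]
      lia
    obtain ⟨_, hxT, hgW⟩ := Finset.exists_mem_notMem_of_card_lt_card card_lt
    obtain ⟨g, hg, rfl⟩ := Finset.mem_image.1 hxT
    obtain ⟨w, hw, s, hs, hws⟩ :=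
      exists_mul_notMem_of_mul_prod_notMem (l := word g) hx (by rwa [prod_word])
    exact ⟨w, hw, s, Finset.mem_biUnion.2 ⟨g, hg, List.mem_toFinset.2 hs⟩, hws⟩

lemma exists_pos_forall_le_inflow_muKer [Infinite G] [IsFiniteMeasure μ]
    (hlazy : 0 < μ {(1 : G)}) (hirr : IrreducibleKernel μ) (n : ℕ) :
    ∃ η : ℝ, 0 < η ∧ ENNReal.ofReal η ≤ μ {(1 : G)} ∧ ∀ W : Finset G, W.Nonempty → W.card ≤ n →
      ∃ y ∉ W, ENNReal.ofReal η ≤ inflow (muKer μ) W y := by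
  classical
  obtain ⟨S, pos_of_mem, exit⟩ := exists_finset_forall_exists_mul_notMem hirr n
  obtain ⟨s₀, hs₀, s₀_min⟩ :=
    Finset.exists_min_image (insert 1 S) (fun s => μ {s}) (Finset.insert_nonempty 1 S)
  have s₀_pos : 0 < μ {s₀} := by
    rcases Finset.mem_insert.1 hs₀ with rfl | h
    exacts [hlazy, pos_of_mem s₀ h]
  refine ⟨μ.real {s₀}, ENNReal.toReal_pos s₀_pos.ne' (measure_ne_top μ _), ?_,
    fun W hW hWn => ?_⟩
  · rw [ofReal_measureReal]
    exact s₀_min 1 (Finset.mem_insert_self 1 S)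
  · obtain ⟨w, hw, s, hs, hws⟩ := exit W hW hWn
    refine ⟨w * s, hws, ?_⟩
    calc ENNReal.ofReal (μ.real {s₀}) ≤ μ {s} := by
          rw [ofReal_measureReal]
          exact s₀_min s (Finset.mem_insert_of_mem hs)
      _ = muKer μ w (w * s) := by simp [muKer]
      _ ≤ inflow (muKer μ) W (w * s) := le_inflow hw _

lemma psiProfile_pos [MeasurableSingletonClass G] [Countable G] [Infinite G]
    [IsProbabilityMeasure μ] (hlazy : 0 < μ {(1 : G)}) (hirr : IrreducibleKernel μ)
    {r : ℝ} (hr : 1 ≤ r) : 0 < psiProfile μ r := by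
  obtain ⟨η, η_pos, η_le, exit⟩ := exists_pos_forall_le_inflow_muKer hlazy hirr ⌊r⌋₊
  have one_lt_sqrt : 1 < √(1 + 1 / r) :=
    Real.lt_sqrt_of_sq_lt (by simpa using zero_lt_one.trans_le hr)
  have bound_pos : 0 < (√(1 + 1 / r) - 1) ^ 2 * η / 2 := by
    have := sub_pos.2 one_lt_sqrt
    positivity
  refine bound_pos.trans_le (le_csInf (image_growthGauge_nonempty (muKer μ) hr) ?_)
  rintro _ ⟨W, ⟨hW, hWr⟩, rfl⟩
  obtain ⟨y, hyW, hy⟩ := exit W hW (Nat.le_floor hWr)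
  have hP := isBistochastic_muKer μ
  exact hP.le_growthGauge hW hWr
    (hP.le_evolveLaw_card_lt (fun x _ => by simpa [muKer] using η_le) hyW hy)

end RandomWalk

end EvolvingSets

theorem evolving_sets_l2_decay_general {α : Type*} [DecidableEq α] [Countable α]
    {P : α → α → ℝ≥0∞} (hP : IsBistochastic P) (hψ : ∀ r, 4 ≤ r → 0 < rootProfile P r)
    {Ks : ℕ → α → α → ℝ≥0∞} {k ℓ : ℕ} (hkℓ : k ≤ ℓ)
    (hKs : ∀ j, k < j → j ≤ ℓ → IsBistochastic (Ks j)) (x : α) {ε : ℝ} (hε : 0 < ε)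
    (hcount : ∫ u in (4 : ℝ)..4 / ε, 1 / (u * rootProfile P u) ≤
      (Set.ncard {j | k < j ∧ j ≤ ℓ ∧ Ks j = P} : ℝ)) :
    ∑' y, prodKer Ks k (ℓ - k) x y ^ 2 ≤ ENNReal.ofReal ε := by
  have : Nonempty α := ⟨x⟩
  obtain ⟨m, rfl⟩ := Nat.exists_eq_add_of_le hkℓ
  have meanCard_eq := meanCard_evolvingLaw hKs x
  set ν := evolvingLaw Ks k x m with hν
  have potential_ge : ∫ u in (4 : ℝ)..4 / ε, 1 / (u * rootProfile P u) ≤ potential P ν :=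
    hcount.trans (hP.ncard_le_potential_evolvingLaw hψ hKs x)
  have rootMoment_sq_le : rootMoment ν ^ 2 ≤ ε := by
    by_contra! hlt
    have : 4 / rootMoment ν ^ 2 < 4 / ε := by gcongr
    exact potential_ge.not_gt (hP.strictMonoOn_integral_rootProfile hψ
      (four_le_four_div_rootMoment_sq meanCard_eq)
      ((four_le_four_div_rootMoment_sq meanCard_eq).trans this.le) this)
  calc ∑' y, prodKer Ks k (k + m - k) x y ^ 2
      = ∑' y, ν {W | y ∈ W} ^ 2 := by
        simp only [Nat.add_sub_cancel_left, hν, evolvingLaw_setOf_mem hKs]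
    _ ≤ ENNReal.ofReal (rootMoment ν ^ 2) := tsum_measure_mem_sq_le (by simp [meanCard_eq])
    _ ≤ ENNReal.ofReal ε := ENNReal.ofReal_le_ofReal rootMoment_sq_le

/-- **Decay of the `ℓ²`-norm of inhomogeneous transition probabilities via evolving
sets.**  Let `G` be a countably infinite group and `μ` a probability measure on `G` with
`μ(e_G) > 0` and irreducible kernel `P_μ`.  Let `(P_j)_{j ∈ [n]}` be kernels, each equal
either to `P_μ` or to a deterministic kernel `P^{(g)}`, and let
`P_{k,ℓ} = P_{k+1} ⋯ P_ℓ`.  Then for all `0 ≤ k ≤ ℓ ≤ n`, `x ∈ G` and `ε ∈ (0,1)`,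
`Σ_y P_{k,ℓ}(x, y)² ≤ ε`, provided the number of indices `j ∈ {k+1, …, ℓ}` with
`P_j = P_μ` is at least `∫_4^{4/ε} du/(u ψ(u))`. -/
theorem evolving_sets_l2_decay
    {G : Type*} [Group G] [DecidableEq G] [MeasurableSpace G] [MeasurableSingletonClass G]
    [Countable G] [Infinite G]
    (μ : Measure G) [IsProbabilityMeasure μ]
    (hlazy : 0 < μ {(1 : G)}) (hirr : IrreducibleKernel μ)
    (n : ℕ) (Ks : ℕ → G → G → ℝ≥0∞)
    (hKs : ∀ j, 1 ≤ j → j ≤ n → Ks j = muKer μ ∨ ∃ g : G, Ks j = detKer g) :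
    ∀ k ℓ : ℕ, k ≤ ℓ → ℓ ≤ n → ∀ x : G, ∀ ε : ℝ, ε ∈ Set.Ioo (0 : ℝ) 1 →
      (∫ u in (4:ℝ)..(4 / ε), 1 / (u * psiProfile μ u))
          ≤ (Set.ncard {j : ℕ | k < j ∧ j ≤ ℓ ∧ Ks j = muKer μ} : ℝ) →
      ∑' y : G, (prodKer Ks k (ℓ - k) x y) ^ 2 ≤ ENNReal.ofReal ε := by
  intro k ℓ hkℓ hℓn x ε hε hcount
  have hψ (r : ℝ) (hr : 4 ≤ r) : 0 < rootProfile (muKer μ) r :=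
    psiProfile_pos hlazy hirr (by linarith)
  refine evolving_sets_l2_decay_general (isBistochastic_muKer μ) hψ hkℓ (fun j hkj hjℓ => ?_) x
    hε.1 hcount
  rcases hKs j (by lia) (hjℓ.trans hℓn) with hj | ⟨g, hj⟩
  · exact hj ▸ isBistochastic_muKer μ
  · exact hj ▸ isBistochastic_detKer g
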